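/- arXiv:2406.07183 — 2 statements merged into one kernel-verified Lean document; each statement's English description precedes it below -/
import Mathlib

section
/- Let G₁ be an r₁-regular graph on n₁ vertices and G₂ an arbitrary graph on n₂ vertices, let α ∈ [0,1], and let λ be a real number such that (λ − αr₁)I_{n₂} − A_α(G₂) is invertible. Then φ(A_α(G₁ ⋇ G₂), λ) = ∏_{i=1}^{n₂}(λ − αr₁ − λ_i(A_α(G₂)))^{n₁} · ∏_{i=1}^{n₁}[ (λ − αr₁)·(λ − (2+n₂)r₁α − (1−α)λ_i(A(G₁)) − (1−α)²Γ_{A_α(G₂)}(λ − αr₁)·λ_i(A(G₁))²) − (1−α)²λ_i(A(G₁))² ]. -/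
open Matrix BigOperators

attribute [local instance] Classical.propDecidable

noncomputable section

namespace AalphaSpectra

/-- The adjacency matrix (over `ℝ`) of a simple graph. -/
def adjMat {V : Type*} [Fintype V] (G : SimpleGraph V) : Matrix V V ℝ :=
  Matrix.of fun i j => if G.Adj i j then (1 : ℝ) else 0

/-- The diagonal degree matrix (over `ℝ`) of a simple graph. -/
def degMat {V : Type*} [Fintype V] (G : SimpleGraph V) : Matrix V V ℝ :=
  Matrix.diagonal fun i => ((G.neighborSet i).ncard : ℝ)

/-- The `A_α`-matrix `A_α(G) = α·D(G) + (1 - α)·A(G)` of a simple graph. -/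
def AMat {V : Type*} [Fintype V] (G : SimpleGraph V) (a : ℝ) : Matrix V V ℝ :=
  a • degMat G + (1 - a) • adjMat G

/-- The characteristic polynomial `φ(M, x) = det(x·I − M)` of a square matrix,
evaluated at `x`. -/
def charPolyAt {n : Type*} [Fintype n] (M : Matrix n n ℝ) (x : ℝ) : ℝ :=
  letI := Classical.decEq n
  (x • (1 : Matrix n n ℝ) - M).det

/-- The `M`-coronal `Γ_M(x) = 1ᵀ (x·I − M)⁻¹ 1`, the sum of all entries of
`(x·I − M)⁻¹`. -/
def coronal {n : Type*} [Fintype n] (M : Matrix n n ℝ) (x : ℝ) : ℝ :=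
  letI := Classical.decEq n
  ∑ i, ∑ j, (x • (1 : Matrix n n ℝ) - M)⁻¹ i j

/-- `G` is `r`-regular: every vertex has exactly `r` neighbours. -/
def IsRegularOfDeg {V : Type*} [Fintype V] (G : SimpleGraph V) (r : ℕ) : Prop :=
  ∀ v : V, (G.neighborSet v).ncard = r

/-- The splitting neighbourhood corona `G₁ ⋇ G₂`: take the splitting graph
`Spl(G₁)` (original vertices `Sum.inl (Sum.inl v)`, added vertices
`Sum.inl (Sum.inr u)`) together with one copy of `G₂` for each vertex of `G₁`,
and join every vertex of the `i`-th copy of `G₂` to all the vertices of `V(G₁)`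
adjacent to `vᵢ` in `G₁`. -/
def splitNbhdCorona {V₁ V₂ : Type*} (G₁ : SimpleGraph V₁) (G₂ : SimpleGraph V₂) :
    SimpleGraph ((V₁ ⊕ V₁) ⊕ V₁ × V₂) :=
  SimpleGraph.fromRel fun a b =>
    match a, b with
    | Sum.inl (Sum.inl v), Sum.inl (Sum.inl w) => G₁.Adj v w
    | Sum.inl (Sum.inl v), Sum.inl (Sum.inr u) => G₁.Adj v u
    | Sum.inl (Sum.inl v), Sum.inr p => G₁.Adj v p.1
    | Sum.inr p, Sum.inr q => p.1 = q.1 ∧ G₂.Adj p.2 q.2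
    | _, _ => False

/-!
Write `s = λ - α r₁`, `A = A(G₁)` and `M = s I - A_α(G₂)`. The degrees in `G₁ ⋇ G₂` are
`(2 + n₂) r₁` on `V(G₁)`, `r₁` on the added vertices and `r₁ + deg` on the copies of `G₂`, so
`λ I - A_α(G₁ ⋇ G₂)` has a block form in which the copies contribute the diagonal block `I ⊗ M` and
are attached to `V(G₁)` through `-(1 - α) (A ⊗ 1ᵀ)`.

Since `M` is invertible, so is `I ⊗ M`, of determinant `(det M) ^ n₁`, and the Schur complement of
this block only changes the `V(G₁)` block: `joinMat_mul_kronecker_mul` shows that it subtracts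
`(1 - α)² Γ A²`, where `Γ` is the coronal at `s`. What remains is a block matrix whose lower right
block is `s I`; `det_fromBlocks_smul_one` turns its determinant into that of a quadratic polynomial
in `A`, also when `s = 0`. As `A` is symmetric, the latter is a product over the eigenvalues of `A`
(`det_quadratic_eq_prod_eigenvalues`, `prod_eigenvalues_eq`).
-/

lemma charPolyAt_eq_det {n : Type*} [Fintype n] [DecidableEq n] (M : Matrix n n ℝ) (x : ℝ) :
    charPolyAt M x = (x • (1 : Matrix n n ℝ) - M).det := by
  unfold charPolyAt
  convert rfl

lemma coronal_eq_sum_inv {n : Type*} [Fintype n] [DecidableEq n] (M : Matrix n n ℝ) (x : ℝ) :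
    coronal M x = ∑ i, ∑ j, (x • (1 : Matrix n n ℝ) - M)⁻¹ i j := by
  unfold coronal
  convert rfl

lemma ncard_neighborSet_eq_sum {V : Type*} [Fintype V] (G : SimpleGraph V) (v : V) :
    ((G.neighborSet v).ncard : ℝ) = ∑ w, adjMat G v w := by
  simp [adjMat, Set.ncard_eq_toFinset_card', SimpleGraph.neighborSet]

lemma adjMat_comm {V : Type*} [Fintype V] (G : SimpleGraph V) (v w : V) :
    adjMat G v w = adjMat G w v := by
  simp [adjMat, G.adj_comm]

lemma adjMat_isHermitian {V : Type*} [Fintype V] (G : SimpleGraph V) :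
    (adjMat G).IsHermitian := by
  ext v w
  simpa using adjMat_comm G w v

/-- A quadratic polynomial in a real symmetric matrix is diagonalised by the same orthogonal
matrix, so its determinant is the product of its values at the eigenvalues. -/
lemma det_quadratic_eq_prod_eigenvalues {n : Type*} [Fintype n] [DecidableEq n]
    {A : Matrix n n ℝ} (hA : A.IsHermitian) (a b c : ℝ) :
    (a • (1 : Matrix n n ℝ) + b • A + c • (A * A)).det =
      ∏ i, (a + b * hA.eigenvalues i + c * hA.eigenvalues i ^ 2) := by
  set φ := Unitary.conjStarAlgAut ℝ (Matrix n n ℝ) hA.eigenvectorUnitary with hφ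
  set D : Matrix n n ℝ := diagonal hA.eigenvalues with hD
  have h : A = φ D := hA.spectral_theorem
  have h2 : a • (1 : Matrix n n ℝ) + b • A + c • (A * A) =
      φ (a • (1 : Matrix n n ℝ) + b • D + c • (D * D)) := by
    simp only [map_add, map_smul, map_mul, map_one, ← h]
  have h3 : a • (1 : Matrix n n ℝ) + b • D + c • (D * D) =
      diagonal fun i => a + b * hA.eigenvalues i + c * hA.eigenvalues i ^ 2 := by
    rw [hD, diagonal_mul_diagonal, ← diagonal_one, ← diagonal_smul, ← diagonal_smul,
      ← diagonal_smul, diagonal_add, diagonal_add]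
    congr 1
    ext i
    simp [sq]
  rw [h2, hφ, Unitary.conjStarAlgAut_apply, det_mul_comm, ← mul_assoc, Unitary.coe_star_mul_self,
    one_mul, h3, det_diagonal]

/-- The evaluation identity for the characteristic polynomial determines the `f i` up to order,
so they may replace Mathlib's eigenvalues in any symmetric expression. -/
lemma prod_eigenvalues_eq {V : Type*} [Fintype V] [DecidableEq V] {A : Matrix V V ℝ}
    (hA : A.IsHermitian) {k : ℕ} (f : Fin k → ℝ)
    (hf : ∀ x : ℝ, charPolyAt A x = ∏ i, (x - f i)) (q : ℝ → ℝ) :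
    ∏ i, q (hA.eigenvalues i) = ∏ i, q (f i) := by
  have hpoly : A.charpoly = ∏ i, (Polynomial.X - Polynomial.C (f i)) := by
    refine Polynomial.funext fun x => ?_
    rw [eval_charpoly, Polynomial.eval_prod]
    simpa [charPolyAt_eq_det, smul_one_eq_diagonal, Matrix.scalar_apply] using hf x
  have hroots : Multiset.map hA.eigenvalues Finset.univ.val = Multiset.map f Finset.univ.val := by
    have h1 := hA.roots_charpoly_eq_eigenvalues
    rw [hpoly, Polynomial.roots_prod _ _
      (Finset.prod_ne_zero_iff.mpr fun i _ => Polynomial.X_sub_C_ne_zero _)] at h1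
    simpa using h1.symm
  have h := congrArg (fun m => (Multiset.map q m).prod) hroots
  rwa [Multiset.map_map, Multiset.map_map] at h

/-- The determinant of a block matrix with scalar lower right block. For `s ≠ 0` this is the Schur
complement formula; both sides are continuous in `s`, so it persists at `s = 0`. -/
lemma det_fromBlocks_smul_one {n : Type*} [Fintype n] [DecidableEq n]
    (X B C : Matrix n n ℝ) (s : ℝ) :
    (fromBlocks X B C (s • (1 : Matrix n n ℝ))).det = (s • X - B * C).det := by
  have hl : Continuous fun s : ℝ => (fromBlocks X B C (s • (1 : Matrix n n ℝ))).det :=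
    (Continuous.matrix_fromBlocks continuous_const continuous_const continuous_const
      (continuous_id.smul continuous_const)).matrix_det
  have hr : Continuous fun s : ℝ => (s • X - B * C).det :=
    ((continuous_id.smul continuous_const).sub continuous_const).matrix_det
  refine congrFun (hl.ext_on (dense_compl_singleton (0 : ℝ)) hr ?_) s
  intro t ht
  have ht' : t ≠ 0 := ht
  let _ : Invertible (t • (1 : Matrix n n ℝ)) :=
    ⟨t⁻¹ • 1, by simp [smul_smul, ht'], by simp [smul_smul, ht']⟩
  have hinv : ⅟(t • (1 : Matrix n n ℝ)) = t⁻¹ • 1 := rfl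
  simp only []
  rw [det_fromBlocks₂₂, hinv, ← det_mul]
  congr 1
  simp [mul_sub, smul_smul, ht']

section Corona

variable {V₁ V₂ : Type*} [Fintype V₁] [Fintype V₂]

/-- The `V(G₁)`-by-copies block of the adjacency matrix of `G₁ ⋇ G₂`, i.e. `A(G₁) ⊗ 1ᵀ`. -/
def joinMat (V₂ : Type*) (G₁ : SimpleGraph V₁) : Matrix V₁ (V₁ × V₂) ℝ :=
  Matrix.of fun v p => adjMat G₁ v p.1

lemma adjMat_splitNbhdCorona (G₁ : SimpleGraph V₁) (G₂ : SimpleGraph V₂) :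
    adjMat (splitNbhdCorona G₁ G₂) =
      fromBlocks (fromBlocks (adjMat G₁) (adjMat G₁) (adjMat G₁) 0)
        (fromRows (joinMat V₂ G₁) 0) (fromCols (joinMat V₂ G₁)ᵀ 0)
        (kroneckerMap (· * ·) 1 (adjMat G₂)) := by
  ext x y
  rcases x with (v | u) | ⟨k, a⟩ <;> rcases y with (w | z) | ⟨l, b⟩ <;>
    simp [adjMat, splitNbhdCorona, joinMat, G₁.adj_comm, Matrix.one_apply]
  · grind [SimpleGraph.Adj.ne]
  · grind [SimpleGraph.Adj.ne, G₂.adj_comm]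

/-- The degrees in `G₁ ⋇ G₂` are `(2 + n₂) r₁` on `V(G₁)`, `r₁` on the added vertices and
`r₁ + deg` on the copies of `G₂`. -/
lemma degMat_splitNbhdCorona (G₁ : SimpleGraph V₁) (G₂ : SimpleGraph V₂) (r₁ : ℕ)
    (hreg : IsRegularOfDeg G₁ r₁) :
    degMat (splitNbhdCorona G₁ G₂) =
      fromBlocks (fromBlocks (((2 + (Fintype.card V₂ : ℝ)) * r₁) • 1) 0 0 ((r₁ : ℝ) • 1)) 0 0
        (kroneckerMap (· * ·) 1 ((r₁ : ℝ) • 1 + degMat G₂)) := by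
  have hrow : ∀ v, ∑ w, adjMat G₁ v w = r₁ := fun v => by
    rw [← ncard_neighborSet_eq_sum, hreg v]
  have hcol : ∀ v, ∑ w, adjMat G₁ w v = r₁ := fun v => by
    rw [← hrow v]; exact Finset.sum_congr rfl fun w _ => adjMat_comm _ _ _
  have hdeg : ∀ x, (((splitNbhdCorona G₁ G₂).neighborSet x).ncard : ℝ) =
      Sum.elim (Sum.elim (fun _ => (2 + (Fintype.card V₂ : ℝ)) * r₁) fun _ => (r₁ : ℝ))
        (fun p => r₁ + ((G₂.neighborSet p.2).ncard : ℝ)) x := by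
    intro x
    rw [ncard_neighborSet_eq_sum, adjMat_splitNbhdCorona]
    rcases x with (v | u) | ⟨k, a⟩
    · simp [Fintype.sum_sum_type, Fintype.sum_prod_type, joinMat, hrow, ← Finset.mul_sum]
      ring
    · simp [Fintype.sum_sum_type, hrow]
    · simp [Fintype.sum_sum_type, Fintype.sum_prod_type, joinMat, hcol, Matrix.one_apply,
        ncard_neighborSet_eq_sum]
  unfold degMat
  simp only [hdeg]
  ext x y
  rcases x with (v | u) | ⟨k, a⟩ <;> rcases y with (w | z) | ⟨l, b⟩ <;>
    simp [Matrix.one_apply, diagonal_apply]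
  split_ifs <;> simp_all

/-- Sandwiching `I ⊗ N` between `A ⊗ 1ᵀ` and its transpose sums all entries of `N`. -/
lemma joinMat_mul_kronecker_mul (G₁ : SimpleGraph V₁) (N : Matrix V₂ V₂ ℝ) :
    joinMat V₂ G₁ * kroneckerMap (· * ·) (1 : Matrix V₁ V₁ ℝ) N * (joinMat V₂ G₁)ᵀ =
      (∑ a, ∑ b, N a b) • (adjMat G₁ * adjMat G₁) := by
  ext v w
  simp only [Matrix.mul_apply, joinMat, Fintype.sum_prod_type, kroneckerMap_apply, of_apply,
    transpose_apply, Matrix.one_apply, Matrix.smul_apply, smul_eq_mul, ite_mul, one_mul, zero_mul,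
    mul_ite, mul_zero]
  simp [Finset.sum_ite_irrel, Finset.sum_mul, Finset.mul_sum]
  refine Finset.sum_congr rfl fun k _ => ?_
  rw [Finset.sum_comm]
  refine Finset.sum_congr rfl fun a _ => Finset.sum_congr rfl fun b _ => ?_
  rw [adjMat_comm G₁ w k]
  ring

end Corona

theorem charPolyAt_splitNbhdCorona
    {V₁ V₂ : Type*} [Fintype V₁] [Fintype V₂]
    (G₁ : SimpleGraph V₁) (G₂ : SimpleGraph V₂)
    (n₁ n₂ r₁ : ℕ)
    (hn₁ : Fintype.card V₁ = n₁) (hn₂ : Fintype.card V₂ = n₂)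
    (hreg₁ : IsRegularOfDeg G₁ r₁)
    (α : ℝ) (hα : α ∈ Set.Icc (0 : ℝ) 1)
    (f : Fin n₁ → ℝ) (hfa : Antitone f)
    (hf : ∀ x : ℝ, charPolyAt (adjMat G₁) x = ∏ i, (x - f i))
    (g : Fin n₂ → ℝ) (hga : Antitone g)
    (hg : ∀ x : ℝ, charPolyAt (AMat G₂ α) x = ∏ i, (x - g i))
    (lam : ℝ)
    (hinv : IsUnit ((lam - α * (r₁ : ℝ)) • (1 : Matrix V₂ V₂ ℝ) - AMat G₂ α)) :
    charPolyAt (AMat (splitNbhdCorona G₁ G₂) α) lam =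
      (∏ i, (lam - α * (r₁ : ℝ) - g i) ^ n₁) *
        ∏ i,
          ((lam - α * (r₁ : ℝ)) *
              (lam - (2 + (n₂ : ℝ)) * (r₁ : ℝ) * α - (1 - α) * f i -
                (1 - α) ^ 2 * coronal (AMat G₂ α) (lam - α * (r₁ : ℝ)) * (f i) ^ 2) -
            (1 - α) ^ 2 * (f i) ^ 2) := by
  subst hn₁ hn₂
  set s : ℝ := lam - α * r₁ with hs
  set A := adjMat G₁ with hA
  set M : Matrix V₂ V₂ ℝ := s • (1 : Matrix V₂ V₂ ℝ) - AMat G₂ α with hM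
  set X : Matrix V₁ V₁ ℝ :=
    (lam - (2 + (Fintype.card V₂ : ℝ)) * r₁ * α) • 1 - (1 - α) • A with hX
  set Γ := coronal (AMat G₂ α) s with hΓ
  have hMdet : IsUnit M.det := (isUnit_iff_isUnit_det M).mp hinv
  have hblocks : lam • 1 - AMat (splitNbhdCorona G₁ G₂) α =
      fromBlocks (fromBlocks X (-(1 - α) • A) (-(1 - α) • A) (s • 1))
        (fromRows (-(1 - α) • joinMat V₂ G₁) 0) (fromCols (-(1 - α) • (joinMat V₂ G₁)ᵀ) 0)
        (kroneckerMap (· * ·) 1 M) := by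
    rw [AMat, adjMat_splitNbhdCorona, degMat_splitNbhdCorona G₁ G₂ r₁ hreg₁]
    ext x y
    rcases x with (v | u) | ⟨k, a⟩ <;> rcases y with (w | z) | ⟨l, b⟩ <;>
      simp [hX, hM, hs, hA, AMat, Matrix.one_apply, Prod.ext_iff]
    all_goals first | ring1 | grind
  let _ : Invertible (kroneckerMap (· * ·) (1 : Matrix V₁ V₁ ℝ) M) :=
    invertibleOfLeftInverse _ (kroneckerMap (· * ·) (1 : Matrix V₁ V₁ ℝ) M⁻¹) (by
      rw [← mul_kronecker_mul, nonsing_inv_mul _ hMdet, one_mul, one_kronecker_one])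
  have hinvK : ⅟(kroneckerMap (· * ·) (1 : Matrix V₁ V₁ ℝ) M) =
      kroneckerMap (· * ·) (1 : Matrix V₁ V₁ ℝ) M⁻¹ := rfl
  have hschur : fromBlocks X (-(1 - α) • A) (-(1 - α) • A) (s • 1) -
      fromRows (-(1 - α) • joinMat V₂ G₁) (0 : Matrix V₁ (V₁ × V₂) ℝ) *
          kroneckerMap (· * ·) (1 : Matrix V₁ V₁ ℝ) M⁻¹ *
        fromCols (-(1 - α) • (joinMat V₂ G₁)ᵀ) (0 : Matrix (V₁ × V₂) V₁ ℝ) =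
      fromBlocks (X - ((1 - α) ^ 2 * Γ) • (A * A)) (-(1 - α) • A) (-(1 - α) • A)
        (s • (1 : Matrix V₁ V₁ ℝ)) := by
    rw [fromRows_mul, fromRows_mul_fromCols]
    simp only [Matrix.zero_mul, Matrix.mul_zero, smul_mul, Matrix.mul_smul, smul_smul,
      joinMat_mul_kronecker_mul]
    rw [sub_eq_add_neg, fromBlocks_neg, fromBlocks_add, hΓ, coronal_eq_sum_inv]
    simp only [neg_zero, smul_zero, add_zero, sub_eq_add_neg X, ← hM, ← hA]
    congr 3
    ring_nf
  have hquad : s • (X - ((1 - α) ^ 2 * Γ) • (A * A)) - (-(1 - α) • A) * (-(1 - α) • A) =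
      (s * (lam - (2 + (Fintype.card V₂ : ℝ)) * r₁ * α)) • (1 : Matrix V₁ V₁ ℝ) +
        (-(s * (1 - α))) • A + (-(s * (1 - α) ^ 2 * Γ) - (1 - α) ^ 2) • (A * A) := by
    rw [hX, smul_mul, Matrix.mul_smul]
    module
  rw [charPolyAt_eq_det, hblocks, det_fromBlocks₂₂, hinvK, hschur, det_fromBlocks_smul_one, hquad,
    det_quadratic_eq_prod_eigenvalues (adjMat_isHermitian G₁),
    prod_eigenvalues_eq (adjMat_isHermitian G₁) f hf
      (fun t => s * (lam - (2 + (Fintype.card V₂ : ℝ)) * r₁ * α) + -(s * (1 - α)) * t +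
        (-(s * (1 - α) ^ 2 * Γ) - (1 - α) ^ 2) * t ^ 2),
    det_kronecker, det_one, one_pow, one_mul, Finset.prod_pow, ← hg, charPolyAt_eq_det]
  congr 1
  exact Finset.prod_congr rfl fun i _ => by ring

end AalphaSpectra
end
end

section
/- Let G₁ and G₂ be r-regular graphs on the same number n of vertices whose adjacency matrices have the same characteristic polynomial (A-cospectral regular graphs), and let H be an arbitrary finite simple graph. Then for every α ∈ [0,1], the graphs G₁ ⊔̇ H and G₂ ⊔̇ H are A_α-cospectral, i.e., A_α(G₁ ⊔̇ H) and A_α(G₂ ⊔̇ H) have the same characteristic polynomial. -/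
/-!
Let `B` be the vertex-edge incidence matrix of an `r`-regular graph `G`. Then
`B Bᵀ = r I + A(G)` and `Bᵀ B = 2 I + A(L(G))`, and in the corona with `H` all original vertices
have degree `r + |W|`, all edge-vertices degree `2r`. So `x I - A_α(G ⊔̇ H)` is a block matrix built
from `B`, scalar matrices, the centre-to-copy matrix and `I ⊗ K`, with
`K = x I - α (D(H) + I) - (1 - α) A(H)`.

When `K` is invertible, the Schur complement of `I ⊗ K` only shifts the vertex block by a multiple of
`I` (`det_corona`). When moreover `q = x - 2rα + 2(1 - α)` is nonzero, a row operation followed by a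
second Schur complement leaves `det(p I - t B Bᵀ)`, i.e. a value of `det(s I - t A(G))` (`det_core`).
That value is determined by the characteristic polynomial of `A(G)` (`det_pencil`), and the numbers
of edges agree by double counting (`card_edges`). The two characteristic polynomials thus agree
wherever the nonzero polynomial `det K * q` in `x` does not vanish, hence everywhere.
-/

open Matrix BigOperators

attribute [local instance] Classical.propDecidable

noncomputable section

namespace AalphaSpectra

/-- The `Q`-vertex corona `G₁ ⊔̇ G₂`: take the `Q`-graph `Q(G₁)` (original
vertices `Sum.inl (Sum.inl v)`, edge-vertices `Sum.inl (Sum.inr e)`; an original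
vertex is joined to the edge-vertices of the edges containing it, and two
edge-vertices are joined when the corresponding edges of `G₁` are adjacent)
together with one copy of `G₂` for each vertex of `G₁`, and join the `i`-th
vertex of `V(G₁)` to every vertex of the `i`-th copy of `G₂`. -/
def qVertexCorona {V₁ V₂ : Type*} (G₁ : SimpleGraph V₁) (G₂ : SimpleGraph V₂) :
    SimpleGraph ((V₁ ⊕ ↥G₁.edgeSet) ⊕ V₁ × V₂) :=
  SimpleGraph.fromRel fun a b =>
    match a, b with
    | Sum.inl (Sum.inl v), Sum.inl (Sum.inr e) => v ∈ (e : Sym2 V₁)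
    | Sum.inl (Sum.inr e), Sum.inl (Sum.inr e') =>
        e ≠ e' ∧ ∃ v, v ∈ (e : Sym2 V₁) ∧ v ∈ (e' : Sym2 V₁)
    | Sum.inl (Sum.inl v), Sum.inr p => v = p.1
    | Sum.inr p, Sum.inr q => p.1 = q.1 ∧ G₂.Adj p.2 q.2
    | _, _ => False

/-! ### Block determinants -/

section

variable {V E W : Type*} [Fintype V] [Fintype E] [Fintype W]

/-- Determinant of the part of the matrix coming from the `Q`-graph. Adding `-Bᵀ` times the top
block row to the bottom one clears `Bᵀ * B`, so only `q ≠ 0` is needed for the Schur complement. -/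
lemma det_core (B : Matrix V E ℝ) (p q b : ℝ) (hq : q ≠ 0) :
    (fromBlocks (p • (1 : Matrix V V ℝ)) (-(b • B)) (-(b • Bᵀ))
      (q • (1 : Matrix E E ℝ) - b • (Bᵀ * B))).det =
    q ^ Fintype.card E *
      (p • (1 : Matrix V V ℝ) - (b * (b + p) / q) • (B * Bᵀ)).det := by
  have h1 : fromBlocks (1 : Matrix V V ℝ) 0 (-Bᵀ) (1 : Matrix E E ℝ) *
      fromBlocks (p • (1 : Matrix V V ℝ)) (-(b • B)) (-(b • Bᵀ))
        (q • (1 : Matrix E E ℝ) - b • (Bᵀ * B)) =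
      fromBlocks (p • (1 : Matrix V V ℝ)) (-(b • B)) (-((b + p) • Bᵀ))
        (q • (1 : Matrix E E ℝ)) := by
    rw [fromBlocks_multiply]
    congr 1
    · simp
    · simp
    · simp [add_smul]
    · simp
  have h2 := congrArg Matrix.det h1
  rw [det_mul, det_fromBlocks_zero₁₂, det_one, det_one, one_mul, one_mul] at h2
  rw [h2]
  let _ : Invertible (q • (1 : Matrix E E ℝ)) :=
    ⟨q⁻¹ • 1, by simp [smul_smul, hq], by simp [smul_smul, hq]⟩
  rw [det_fromBlocks₂₂]
  have h3 : ⅟(q • (1 : Matrix E E ℝ)) = q⁻¹ • 1 := rfl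
  rw [h3, det_smul, det_one, mul_one]
  congr 3
  simp [smul_smul]
  congr 1
  field_simp

/-- The `0`-`1` matrix with entry `1` at `(v, p)` when the vertex `p` of the corona lies in the copy
of the second graph attached to `v`. -/
def centreMat (V W : Type*) : Matrix V (V × W) ℝ :=
  Matrix.of fun v p => if v = p.1 then (1 : ℝ) else 0

open Kronecker in
lemma centre_mul (N : Matrix W W ℝ) :
    centreMat V W * ((1 : Matrix V V ℝ) ⊗ₖ N) * (centreMat V W)ᵀ =
      (∑ i, ∑ j, N i j) • (1 : Matrix V V ℝ) := by
  ext v w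
  simp only [Matrix.mul_apply, centreMat, Matrix.transpose_apply, Matrix.of_apply,
    Matrix.kroneckerMap_apply, Fintype.sum_prod_type, Matrix.smul_apply, smul_eq_mul,
    Matrix.one_apply]
  simp
  by_cases h : v = w
  · subst h
    simp
    exact Finset.sum_comm
  · simp [h]

open Kronecker in
/-- Eliminating the copies of the second graph: their Schur complement shifts the `V`-block by the
scalar `b ^ 2 * Γ`, where `Γ` is the sum of the entries of `K⁻¹`. -/
lemma det_corona (B : Matrix V E ℝ) (K : Matrix W W ℝ) (hK : K.det ≠ 0)
    (s q b : ℝ) (hq : q ≠ 0) :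
    (fromBlocks (fromBlocks (s • (1 : Matrix V V ℝ)) (-(b • B)) (-(b • Bᵀ))
      (q • (1 : Matrix E E ℝ) - b • (Bᵀ * B)))
      (-(b • fromRows (centreMat V W) 0)) (-(b • fromCols (centreMat V W)ᵀ 0))
      ((1 : Matrix V V ℝ) ⊗ₖ K)).det =
    K.det ^ Fintype.card V * (q ^ Fintype.card E *
      ((s - b ^ 2 * ∑ i, ∑ j, K⁻¹ i j) • (1 : Matrix V V ℝ) -
        (b * (b + (s - b ^ 2 * ∑ i, ∑ j, K⁻¹ i j)) / q) • (B * Bᵀ)).det) := by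
  have hu : IsUnit K.det := isUnit_iff_ne_zero.mpr hK
  let _ : Invertible ((1 : Matrix V V ℝ) ⊗ₖ K) :=
    ⟨(1 : Matrix V V ℝ) ⊗ₖ K⁻¹,
      by rw [← mul_kronecker_mul, nonsing_inv_mul _ hu, one_mul, one_kronecker_one],
      by rw [← mul_kronecker_mul, mul_nonsing_inv _ hu, one_mul, one_kronecker_one]⟩
  rw [det_fromBlocks₂₂, det_kronecker, det_one, one_pow, one_mul, ← det_core _ _ _ _ hq]
  congr 2
  have h3 : ⅟((1 : Matrix V V ℝ) ⊗ₖ K) = (1 : Matrix V V ℝ) ⊗ₖ K⁻¹ := rfl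
  have h4 : (-(b • fromRows (centreMat V W) (0 : Matrix E (V × W) ℝ))) *
      ((1 : Matrix V V ℝ) ⊗ₖ K⁻¹) * (-(b • fromCols (centreMat V W)ᵀ (0 : Matrix (V × W) E ℝ))) =
      fromBlocks ((b ^ 2 * ∑ i, ∑ j, K⁻¹ i j) • (1 : Matrix V V ℝ)) 0 0 0 := by
    rw [Matrix.neg_mul, Matrix.neg_mul, Matrix.mul_neg, neg_neg, Matrix.smul_mul,
      Matrix.smul_mul, Matrix.mul_smul, smul_smul, fromRows_mul, fromRows_mul_fromCols,
      centre_mul, fromBlocks_smul, smul_smul, pow_two]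
    simp
  rw [h3, h4, sub_eq_add_neg, fromBlocks_neg, fromBlocks_add]
  rw [sub_smul, sub_eq_add_neg (s • (1 : Matrix V V ℝ))]
  simp only [neg_zero, add_zero]

/-! ### Incidence matrices of regular graphs -/

/-- The vertex-edge incidence matrix, with columns indexed by the edges only. -/
def incid (G : SimpleGraph V) : Matrix V G.edgeSet ℝ :=
  Matrix.of fun v e => if v ∈ (e : Sym2 V) then (1 : ℝ) else 0

lemma incid_eq (G : SimpleGraph V) (v : V) (e : G.edgeSet) :
    incid G v e = G.incMatrix ℝ v e := by
  rw [SimpleGraph.incMatrix_apply']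
  simp [incid, SimpleGraph.incidenceSet, e.2]

/-- Mathlib's incidence matrix has columns indexed by all of `Sym2 V`; the columns off the edge set
vanish, so sums over columns can be restricted to edges. -/
lemma sum_edges (G : SimpleGraph V) [Fintype G.edgeSet] (f : Sym2 V → ℝ)
    (hf : ∀ e, e ∉ G.edgeSet → f e = 0) : ∑ e : G.edgeSet, f e = ∑ e, f e := by
  rw [← Finset.sum_subset (Finset.subset_univ G.edgeSet.toFinset)]
  · exact (Finset.sum_subtype _ (fun e => by simp) f).symm
  · intro e _ he
    exact hf e (by simpa using he)

lemma incMatrix_off (G : SimpleGraph V) (v : V) (e : Sym2 V) (he : e ∉ G.edgeSet) :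
    G.incMatrix ℝ v e = 0 := by
  rw [SimpleGraph.incMatrix_apply']
  exact if_neg fun h => he h.1

lemma degree_eq {G : SimpleGraph V} {r : ℕ} (h : IsRegularOfDeg G r) (v : V) :
    G.degree v = r := by
  rw [← h v, ← SimpleGraph.card_neighborSet_eq_degree, Set.ncard_eq_toFinset_card',
    Set.toFinset_card]

lemma incid_row_sum {G : SimpleGraph V} [Fintype G.edgeSet] {r : ℕ} (h : IsRegularOfDeg G r)
    (v : V) : ∑ e, incid G v e = r := by
  simp only [incid_eq]
  rw [sum_edges G _ (incMatrix_off G v), SimpleGraph.sum_incMatrix_apply, degree_eq h]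

lemma incid_col_sum (G : SimpleGraph V) (e : G.edgeSet) :
    ∑ v, incid G v e = 2 := by
  simp only [incid_eq]
  exact SimpleGraph.sum_incMatrix_apply_of_mem_edgeSet G e.2

lemma incid_mul_transpose {G : SimpleGraph V} [Fintype G.edgeSet] {r : ℕ}
    (h : IsRegularOfDeg G r) :
    incid G * (incid G)ᵀ = (r : ℝ) • (1 : Matrix V V ℝ) + adjMat G := by
  ext v w
  have h1 : (incid G * (incid G)ᵀ) v w = (G.incMatrix ℝ * (G.incMatrix ℝ)ᵀ) v w := by
    simp only [Matrix.mul_apply, Matrix.transpose_apply, incid_eq]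
    exact sum_edges G (fun e => G.incMatrix ℝ v e * G.incMatrix ℝ w e)
      (fun e he => by simp [incMatrix_off G v e he])
  rw [h1, SimpleGraph.incMatrix_mul_transpose]
  by_cases hvw : v = w
  · subst hvw
    simp [adjMat, degree_eq h]
  · simp [adjMat, hvw]

/-- `Bᵀ B = A(L(G)) + 2 I`: two distinct edges share at most one vertex. -/
lemma transpose_mul_incid (G : SimpleGraph V) (e f : G.edgeSet) :
    ((incid G)ᵀ * incid G) e f =
      if e = f then 2 else if ∃ v, v ∈ (e : Sym2 V) ∧ v ∈ (f : Sym2 V) then 1 else 0 := by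
  simp only [Matrix.mul_apply, Matrix.transpose_apply]
  split_ifs with h1 h2
  · subst h1
    rw [← incid_col_sum G e]
    refine Finset.sum_congr rfl fun v _ => ?_
    simp [incid]
  · obtain ⟨v, hv, hv'⟩ := h2
    rw [Finset.sum_eq_single v]
    · simp [incid, hv, hv']
    · -- two distinct common vertices would force `e = f`
      intro w _ hw
      simp only [incid, Matrix.of_apply]
      by_contra hne
      have hwe : w ∈ (e : Sym2 V) := by by_contra hc; simp [hc] at hne
      have hwf : w ∈ (f : Sym2 V) := by by_contra hc; simp [hc] at hne
      exact h1 (Subtype.ext (Sym2.eq_of_ne_mem hw hwe hv hwf hv'))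
    · simp
  · refine Finset.sum_eq_zero fun v _ => ?_
    simp only [incid, Matrix.of_apply]
    by_contra hne
    exact h2 ⟨v, by by_contra hc; simp [hc] at hne, by by_contra hc; simp [hc] at hne⟩

/-! ### The block form of the matrix of the corona -/

open Kronecker in
lemma adjMat_corona (G : SimpleGraph V) [Fintype G.edgeSet] (H : SimpleGraph W) :
    adjMat (qVertexCorona G H) =
      fromBlocks (fromBlocks 0 (incid G) (incid G)ᵀ
        ((incid G)ᵀ * incid G - (2 : ℝ) • (1 : Matrix G.edgeSet G.edgeSet ℝ)))
        (fromRows (centreMat V W) 0) (fromCols (centreMat V W)ᵀ 0)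
        ((1 : Matrix V V ℝ) ⊗ₖ adjMat H) := by
  ext a b
  rcases a with (v | e) | ⟨v, i⟩ <;> rcases b with (w | f) | ⟨w, j⟩
  · simp [adjMat, qVertexCorona]
  · simp [adjMat, qVertexCorona, incid]
  · simp [adjMat, qVertexCorona, centreMat]
  · simp [adjMat, qVertexCorona, incid]
  · simp only [fromBlocks_apply₁₁, fromBlocks_apply₂₂, Matrix.sub_apply, transpose_mul_incid]
    by_cases h : e = f
    · simp [adjMat, qVertexCorona, h]
    · have h' : f ≠ e := fun h' => h h'.symm
      simp [adjMat, qVertexCorona, h, h', and_comm]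
  · simp [adjMat, qVertexCorona]
  · simp [adjMat, qVertexCorona, centreMat]
  · simp [adjMat, qVertexCorona]
  · simp only [fromBlocks_apply₂₂, Matrix.kroneckerMap_apply, Matrix.one_apply, adjMat,
      Matrix.of_apply, qVertexCorona, SimpleGraph.fromRel_adj]
    by_cases h : v = w
    · subst h
      by_cases hij : H.Adj i j
      · simp [hij, hij.ne]
      · have hji : ¬H.Adj j i := fun h => hij h.symm
        simp [hij, hji]
    · have h' : ¬w = v := fun h' => h h'.symm
      simp [h, h']

lemma degMat_eq (G : SimpleGraph V) :
    degMat G = Matrix.diagonal fun i => ∑ j, adjMat G i j := by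
  unfold degMat
  congr 1
  ext i
  simp only [adjMat, Matrix.of_apply, Finset.sum_boole]
  rw [Set.ncard_eq_toFinset_card']
  congr 2
  ext j
  simp

lemma centre_row_sum (v : V) : ∑ p, centreMat V W v p = Fintype.card W := by
  simp only [centreMat, Matrix.of_apply, Fintype.sum_prod_type_right]
  simp

open Kronecker in
lemma degMat_corona (G : SimpleGraph V) [Fintype G.edgeSet] (H : SimpleGraph W) {r : ℕ}
    (h : IsRegularOfDeg G r) :
    degMat (qVertexCorona G H) =
      fromBlocks (fromBlocks (((r : ℝ) + Fintype.card W) • (1 : Matrix V V ℝ)) 0 0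
        ((2 * r : ℝ) • (1 : Matrix G.edgeSet G.edgeSet ℝ))) 0 0
        ((1 : Matrix V V ℝ) ⊗ₖ (degMat H + 1)) := by
  rw [degMat_eq, adjMat_corona, degMat_eq H]
  ext a b
  rcases a with (v | e) | ⟨v, i⟩ <;> rcases b with (w | f) | ⟨w, j⟩
  · simp [Matrix.diagonal_apply, Matrix.one_apply, incid_row_sum h, centre_row_sum]
  · simp
  · simp
  · simp
  · have h1 : ∑ x, ((incid G)ᵀ * incid G) e x = 2 * r := by
      simp only [Matrix.mul_apply, Matrix.transpose_apply]
      rw [Finset.sum_comm]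
      simp only [← Finset.mul_sum, incid_row_sum h, ← Finset.sum_mul, incid_col_sum]
    simp [Matrix.diagonal_apply, Matrix.one_apply, incid_col_sum, h1]
  · simp
  · simp
  · simp
  · simp [Matrix.diagonal_apply, Matrix.one_apply, centreMat, Fintype.sum_prod_type]
    by_cases hv : v = w <;> by_cases hi : i = j <;> simp [hv, hi]
    ring

/-- The `W`-block `α (D(H) + I) + (1 - α) A(H)` of the `A_α`-matrix of the corona. -/
def copyMat (H : SimpleGraph W) (α : ℝ) : Matrix W W ℝ :=
  α • (degMat H + 1) + (1 - α) • adjMat H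

/-- Away from finitely many `x`, the characteristic polynomial of `A_α(G ⊔̇ H)` depends on `G` only
through its numbers of vertices and edges, `r`, and the determinants `det(s I - t A(G))`. -/
lemma charPolyAt_corona (G : SimpleGraph V) [Fintype G.edgeSet] (H : SimpleGraph W) {r : ℕ}
    (h : IsRegularOfDeg G r) (α x : ℝ)
    (hK : charPolyAt (copyMat H α) x ≠ 0) (hq : x - 2 * r * α + 2 * (1 - α) ≠ 0) :
    charPolyAt (AMat (qVertexCorona G H) α) x =
      let q := x - 2 * r * α + 2 * (1 - α)
      let p := x - α * (r + Fintype.card W) - (1 - α) ^ 2 * coronal (copyMat H α) x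
      let t := (1 - α) * (1 - α + p) / q
      charPolyAt (copyMat H α) x ^ Fintype.card V * (q ^ Fintype.card G.edgeSet *
        ((p - t * r) • (1 : Matrix V V ℝ) - t • adjMat G).det) := by
  have key := det_corona (incid G) (x • 1 - copyMat H α) hK
    (x - α * (r + Fintype.card W)) _ (1 - α) hq
  have e1 (p t : ℝ) : ((p - t * r) • (1 : Matrix V V ℝ) - t • adjMat G) =
      p • 1 - t • (incid G * (incid G)ᵀ) := by
    rw [incid_mul_transpose h, smul_add, smul_smul, sub_smul, sub_sub]
  simp only [e1]
  refine Eq.trans ?_ key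
  unfold charPolyAt
  congr 1
  rw [AMat, degMat_corona G H h, adjMat_corona]
  ext a b
  rcases a with (v | e) | ⟨v, i⟩ <;> rcases b with (w | f) | ⟨w, j⟩
  · simp [Matrix.one_apply]
    split_ifs <;> ring
  · simp
  · simp
  · simp
  · simp [Matrix.one_apply]
    split_ifs <;> ring
  · simp
  · simp
  · simp
  · simp [Matrix.one_apply, copyMat]
    by_cases hv : v = w <;> by_cases hi : i = j <;> simp [hv, hi]
    ring

/-! ### Comparing two cospectral graphs -/

lemma card_edges (G : SimpleGraph V) [Fintype G.edgeSet] {r : ℕ}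
    (h : IsRegularOfDeg G r) : Fintype.card G.edgeSet * 2 = Fintype.card V * r := by
  have h1 : ∑ e, ∑ v, incid G v e = ∑ v, ∑ e, incid G v e := Finset.sum_comm
  simp only [incid_row_sum h, incid_col_sum, Finset.sum_const, Finset.card_univ,
    nsmul_eq_mul] at h1
  exact_mod_cast h1

/-- Homogeneous form of cospectrality: the case `t = 0`, where only the orders matter, is included. -/
lemma det_pencil {V₁ V₂ : Type*} [Fintype V₁] [Fintype V₂]
    (A : Matrix V₁ V₁ ℝ) (B : Matrix V₂ V₂ ℝ) (hc : Fintype.card V₁ = Fintype.card V₂)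
    (h : ∀ x, charPolyAt A x = charPolyAt B x) (s t : ℝ) :
    (s • (1 : Matrix V₁ V₁ ℝ) - t • A).det = (s • (1 : Matrix V₂ V₂ ℝ) - t • B).det := by
  by_cases ht : t = 0
  · simp [ht, hc]
  · have h1 : s • (1 : Matrix V₁ V₁ ℝ) - t • A = t • ((s / t) • 1 - A) := by
      rw [smul_sub, smul_smul, mul_div_cancel₀ _ ht]
    have h2 : s • (1 : Matrix V₂ V₂ ℝ) - t • B = t • ((s / t) • 1 - B) := by
      rw [smul_sub, smul_smul, mul_div_cancel₀ _ ht]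
    rw [h1, h2, det_smul, det_smul, hc]
    congr 1
    exact h (s / t)

lemma charPolyAt_eq_eval [dec : DecidableEq V] (M : Matrix V V ℝ) (x : ℝ) :
    charPolyAt M x = M.charpoly.eval x := by
  -- `charPolyAt` uses the classical decidability instance.
  obtain rfl : dec = Classical.decEq V := Subsingleton.elim _ _
  rw [Matrix.eval_charpoly, charPolyAt, Matrix.smul_one_eq_diagonal]
  rfl

end

theorem qVertexCorona_cospectral_of_cospectral_regular
    {V₁ V₂ W : Type*} [Fintype V₁] [Fintype V₂] [Fintype W]
    (G₁ : SimpleGraph V₁) (G₂ : SimpleGraph V₂) (H : SimpleGraph W)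
    [Fintype ↥G₁.edgeSet] [Fintype ↥G₂.edgeSet]
    (n r : ℕ)
    (hn₁ : Fintype.card V₁ = n) (hn₂ : Fintype.card V₂ = n)
    (hreg₁ : IsRegularOfDeg G₁ r) (hreg₂ : IsRegularOfDeg G₂ r)
    (hcosp : ∀ x : ℝ, charPolyAt (adjMat G₁) x = charPolyAt (adjMat G₂) x)
    (α : ℝ) (hα : α ∈ Set.Icc (0 : ℝ) 1) :
    ∀ x : ℝ, charPolyAt (AMat (qVertexCorona G₁ H) α) x =
      charPolyAt (AMat (qVertexCorona G₂ H) α) x := by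
  have hc : Fintype.card V₁ = Fintype.card V₂ := hn₁.trans hn₂.symm
  have hm : Fintype.card G₁.edgeSet = Fintype.card G₂.edgeSet := by
    have h1 := card_edges G₁ hreg₁
    have h2 := card_edges G₂ hreg₂
    rw [hc] at h1
    omega
  have key : (AMat (qVertexCorona G₁ H) α).charpoly = (AMat (qVertexCorona G₂ H) α).charpoly := by
    -- `P` vanishes exactly where `charPolyAt_corona` does not apply.
    obtain ⟨P, hP⟩ : ∃ P, P = (copyMat H α).charpoly *
        (Polynomial.X - Polynomial.C (2 * r * α - 2 * (1 - α))) := ⟨_, rfl⟩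
    have hP0 : P ≠ 0 := hP ▸
      mul_ne_zero (Matrix.charpoly_monic _).ne_zero (Polynomial.X_sub_C_ne_zero _)
    apply mul_left_cancel₀ hP0
    refine Polynomial.funext fun x => ?_
    rw [Polynomial.eval_mul, Polynomial.eval_mul]
    by_cases hx : P.eval x = 0
    · rw [hx, zero_mul, zero_mul]
    · congr 1
      rw [hP, Polynomial.eval_mul, ← charPolyAt_eq_eval, Polynomial.eval_sub,
        Polynomial.eval_X, Polynomial.eval_C] at hx
      obtain ⟨hK, hq⟩ := mul_ne_zero_iff.mp hx
      have hq' : x - 2 * r * α + 2 * (1 - α) ≠ 0 := by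
        intro h0
        exact hq (by linarith)
      rw [← charPolyAt_eq_eval, ← charPolyAt_eq_eval, charPolyAt_corona G₁ H hreg₁ α x hK hq',
        charPolyAt_corona G₂ H hreg₂ α x hK hq']
      simp only [hc, hm]
      rw [det_pencil _ _ hc hcosp]
  intro x
  rw [charPolyAt_eq_eval, charPolyAt_eq_eval, key]

end AalphaSpectra
end
end
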